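/- For n ∈ ℕ, define v(ξ) = P_n(ξ) e^ξ/ξ + L_n^{(1)}(ξ) E_1(-ξ) for ξ with Re(ξ) < 0, where E_1(ζ) = ∫_1^∞ e^{-tζ}/t dt and P_n(x) = Σ_{k=0}^{n} (-1)^k binom(n+1, k+1) Σ_{m=0}^{k} ((k-m)!/k!) x^m. Then v satisfies the Laguerre differential equation ξ v''(ξ) + (2-ξ) v'(ξ) + n v(ξ) = 0, and v is linearly independent of L_n^{(1)}. -/

import Mathlib

open MeasureTheory Set

/-- The associated Laguerre polynomial L_n^{(β)}(z) = Σ_{k=0}^n (-1)^k C(n+β, n-k) z^k / k!. -/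
noncomputable def laguerre (β n : ℕ) (z : ℂ) : ℂ :=
  ∑ k ∈ Finset.range (n + 1),
    (-1 : ℂ) ^ k * ((n + β).choose (n - k) : ℂ) * z ^ k / (Nat.factorial k : ℂ)

/-- The polynomial P_n(x) = Σ_{k=0}^n (-1)^k C(n+1, k+1) Σ_{m=0}^k ((k-m)!/k!) x^m. -/
noncomputable def Pn (n : ℕ) (x : ℂ) : ℂ :=
  ∑ k ∈ Finset.range (n + 1),
    (-1 : ℂ) ^ k * ((n + 1).choose (k + 1) : ℂ) *
      ∑ m ∈ Finset.range (k + 1),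
        ((Nat.factorial (k - m) : ℂ) / (Nat.factorial k : ℂ)) * x ^ m

/-- The exponential integral E_1(ζ) = ∫_1^∞ e^{-tζ}/t dt. -/
noncomputable def E1 (ζ : ℂ) : ℂ :=
  ∫ t in Ioi (1:ℝ), Complex.exp (-(t : ℂ) * ζ) / (t : ℂ)

/-- The second solution v(ξ) = P_n(ξ) e^ξ/ξ + L_n^{(1)}(ξ) E_1(-ξ) of the Laguerre equation. -/
noncomputable def vsol (n : ℕ) (ξ : ℂ) : ℂ :=
  Pn n ξ * Complex.exp ξ / ξ + laguerre 1 n ξ * E1 (-ξ)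

open Filter Topology

/-!
The function of the second kind `u_k(ξ) = (e^ξ / ξ) ∫₀^∞ x^(k+1) e^(-x) / (x - ξ) dx` of the
monomial `ξ^k` satisfies the same relation `ξ u_k'' + (2 - ξ) u_k' + k u_k = k (k + 1) u_{k-1}` as
`ξ^k` itself. The coefficients of `L_n^{(1)}` make the sum of these relations telescope, so
replacing `ξ^k` by `u_k` in `L_n^{(1)}` yields another solution, and this solution is `v`. It is
independent of `L_n^{(1)}` because `ξ v(ξ) → P_n(0) = 1` as `ξ → 0⁻`, while `L_n^{(1)}` is
continuous with `L_n^{(1)}(0) = n + 1`.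
-/

/-- The Laguerre differential operator `z f'' + (β + 1 - z) f' + ν f`, evaluated at `z`. -/
noncomputable def laguerreOp (β ν : ℂ) (f : ℂ → ℂ) (z : ℂ) : ℂ :=
  z * deriv (deriv f) z + (β + 1 - z) * deriv f z + ν * f z

/-- The coefficient of `z ^ k` in `laguerre β n`. The binomial coefficient `C(n+β, n-k)` is written
as `C(n+β, k+β)`, which vanishes for `n < k`, whereas `n - k` would be truncated. -/
noncomputable def laguerreCoeff (β n k : ℕ) : ℂ :=
  (-1) ^ k * (n + β).choose (k + β) / k.factorial

/-- The function of the second kind `(e^z / z) ∫₀^∞ x^(k+1) e^(-x) / (x - z) dx` of the monomial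
`x ^ k` for the weight `x e^(-x)`, in the closed form in which `vsol` is written. -/
noncomputable def monomialSecondKind (k : ℕ) (z : ℂ) : ℂ :=
  (∑ m ∈ Finset.range (k + 1), ((k - m).factorial : ℂ) * z ^ m) * (Complex.exp z / z) +
    z ^ k * E1 (-z)

lemma ne_zero_of_re_neg {z : ℂ} (hz : z.re < 0) : z ≠ 0 := by
  rintro rfl
  exact lt_irrefl _ hz

lemma laguerreOp_sum {ι : Type*} (s : Finset ι) (β ν : ℂ) (c : ι → ℂ) {f : ι → ℂ → ℂ} {z : ℂ}
    (hf : ∀ i ∈ s, AnalyticAt ℂ (f i) z) :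
    laguerreOp β ν (fun w ↦ ∑ i ∈ s, c i * f i w) z = ∑ i ∈ s, c i * laguerreOp β ν (f i) z := by
  have deriv_sum {g : ι → ℂ → ℂ} {w : ℂ} (hg : ∀ i ∈ s, AnalyticAt ℂ (g i) w) :
      deriv (fun w ↦ ∑ i ∈ s, c i * g i w) w = ∑ i ∈ s, c i * deriv (g i) w :=
    (HasDerivAt.fun_sum fun i hi ↦ (hg i hi).differentiableAt.hasDerivAt.const_mul (c i)).deriv
  have deriv_sum_near : deriv (fun w ↦ ∑ i ∈ s, c i * f i w) =ᶠ[𝓝 z]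
      fun w ↦ ∑ i ∈ s, c i * deriv (f i) w := by
    have hf_near : ∀ᶠ w in 𝓝 z, ∀ i ∈ s, AnalyticAt ℂ (f i) w :=
      (Finset.eventually_all s).2 fun i hi ↦ (hf i hi).eventually_analyticAt
    exact hf_near.mono fun w hw ↦ deriv_sum hw
  simp only [laguerreOp, deriv_sum_near.deriv_eq, deriv_sum hf,
    deriv_sum fun i hi ↦ (hf i hi).deriv, Finset.mul_sum, ← Finset.sum_add_distrib]
  exact Finset.sum_congr rfl fun i _ ↦ by ring

lemma laguerreCoeff_succ (β n k : ℕ) :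
    ((k : ℂ) + 1) * (k + 1 + β) * laguerreCoeff β n (k + 1) =
      -((n : ℂ) - k) * laguerreCoeff β n k := by
  have choose_succ : ((n + β).choose (k + β + 1) : ℂ) * (k + β + 1) =
      (n + β).choose (k + β) * (n - k) := by
    rcases le_or_gt k n with hkn | hnk
    · have h := Nat.choose_succ_right_eq (n + β) (k + β)
      rw [Nat.add_sub_add_right] at h
      exact_mod_cast congrArg (Nat.cast : ℕ → ℂ) h
    · simp [Nat.choose_eq_zero_of_lt, show n + β < k + β by omega,
        show n + β < k + β + 1 by omega]
  have hfact : (k.factorial : ℂ) ≠ 0 := mod_cast k.factorial_ne_zero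
  have hk : (k : ℂ) + 1 ≠ 0 := k.cast_add_one_ne_zero
  rw [laguerreCoeff, laguerreCoeff, Nat.factorial_succ, Nat.add_right_comm k 1 β]
  push_cast
  field_simp
  linear_combination (-(-1 : ℂ) ^ k) * choose_succ

lemma laguerre_eq_sum_laguerreCoeff (β n : ℕ) (z : ℂ) :
    laguerre β n z = ∑ k ∈ Finset.range (n + 1), laguerreCoeff β n k * z ^ k := by
  refine Finset.sum_congr rfl fun k hk ↦ ?_
  have hkn : k ≤ n := Finset.mem_range_succ_iff.1 hk
  rw [laguerreCoeff, Nat.choose_symm_of_eq_add (show n + β = (n - k) + (k + β) by omega)]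
  ring

lemma laguerre_zero_right (β n : ℕ) : laguerre β n 0 = (n + β).choose n := by
  simp [laguerre, Finset.sum_range_succ']

lemma continuous_laguerre (β n : ℕ) : Continuous (laguerre β n) := by
  unfold laguerre
  fun_prop

lemma laguerreOp_sum_laguerreCoeff_eq_zero (β n : ℕ) {u : ℕ → ℂ → ℂ} {z : ℂ}
    (hu : ∀ k, AnalyticAt ℂ (u k) z)
    (ladder : ∀ k : ℕ, laguerreOp β k (u k) z = k * (k + β) * u (k - 1) z) :
    laguerreOp β n (fun w ↦ ∑ k ∈ Finset.range (n + 1), laguerreCoeff β n k * u k w) z = 0 := by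
  let T (k : ℕ) : ℂ := k * (k + β) * laguerreCoeff β n k * u (k - 1) z
  have T_succ (k : ℕ) : T (k + 1) = -((n : ℂ) - k) * laguerreCoeff β n k * u k z := by
    simp only [T, Nat.add_sub_cancel, ← laguerreCoeff_succ, Nat.cast_succ]
  have term (k : ℕ) : laguerreCoeff β n k * laguerreOp β n (u k) z = T k - T (k + 1) := by
    have shift : laguerreOp β n (u k) z = laguerreOp β k (u k) z + (n - k) * u k z := by
      unfold laguerreOp
      ring
    rw [shift, ladder, T_succ]
    ring
  have T_zero : T 0 = 0 := by simp [T]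
  have T_last : T (n + 1) = 0 := by simp [T_succ]
  rw [laguerreOp_sum _ _ _ _ fun k _ ↦ hu k, Finset.sum_congr rfl fun k _ ↦ term k,
    Finset.sum_range_sub', T_zero, T_last, sub_zero]

lemma norm_cexp_neg_mul_le {a t : ℝ} {z : ℂ} (ht : 0 ≤ t) (hz : a ≤ z.re) :
    ‖Complex.exp (-(t : ℂ) * z)‖ ≤ Real.exp (-a * t) := by
  have hre : (-(t : ℂ) * z).re = -(t * z.re) := by simp
  rw [Complex.norm_exp, hre, Real.exp_le_exp]
  nlinarith

lemma integral_cexp_neg_mul_Ioi_one {ζ : ℂ} (hζ : 0 < ζ.re) :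
    ∫ t in Ioi (1 : ℝ), Complex.exp (-(t : ℂ) * ζ) = Complex.exp (-ζ) / ζ := by
  have h := integral_exp_mul_complex_Ioi (a := -ζ) (by simpa using hζ) 1
  simpa [mul_comm, neg_div_neg_eq] using h

lemma aestronglyMeasurable_cexp_neg_mul_div (z : ℂ) (μ : Measure ℝ) :
    AEStronglyMeasurable (fun t : ℝ ↦ Complex.exp (-(t : ℂ) * z) / t) μ :=
  Measurable.aestronglyMeasurable (by fun_prop)

lemma integrableOn_cexp_neg_mul_div_Ioi_one {ζ : ℂ} (hζ : 0 < ζ.re) :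
    IntegrableOn (fun t : ℝ ↦ Complex.exp (-(t : ℂ) * ζ) / t) (Ioi 1) := by
  refine (exp_neg_integrableOn_Ioi 1 hζ).mono' (aestronglyMeasurable_cexp_neg_mul_div ζ _) ?_
  filter_upwards [ae_restrict_mem measurableSet_Ioi] with t (ht : 1 < t)
  rw [norm_div, Complex.norm_of_nonneg (by linarith : 0 ≤ t)]
  exact (div_le_self (norm_nonneg _) ht.le).trans (norm_cexp_neg_mul_le (by linarith) le_rfl)

lemma hasDerivAt_cexp_neg_mul_div {t : ℂ} (ht : t ≠ 0) (z : ℂ) :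
    HasDerivAt (fun w ↦ Complex.exp (-t * w) / t) (-Complex.exp (-t * z)) z := by
  refine (((hasDerivAt_id z).const_mul (-t)).cexp.div_const t).congr_deriv ?_
  simp only [id]
  field_simp

lemma hasDerivAt_E1 {ζ : ℂ} (hζ : 0 < ζ.re) : HasDerivAt E1 (-Complex.exp (-ζ) / ζ) ζ := by
  have half_re_pos : 0 < ζ.re / 2 := half_pos hζ
  have half_le_re {z : ℂ} (hz : z ∈ Metric.ball ζ (ζ.re / 2)) : ζ.re / 2 ≤ z.re := by
    have h := (Complex.abs_re_le_norm (z - ζ)).trans_lt (mem_ball_iff_norm.1 hz)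
    rw [Complex.sub_re, abs_lt] at h
    linarith
  have h := (hasDerivAt_integral_of_dominated_loc_of_deriv_le (Metric.ball_mem_nhds ζ half_re_pos)
    (Eventually.of_forall fun z ↦ aestronglyMeasurable_cexp_neg_mul_div z _)
    (integrableOn_cexp_neg_mul_div_Ioi_one hζ)
    (F' := fun z (t : ℝ) ↦ -Complex.exp (-(t : ℂ) * z))
    (Measurable.aestronglyMeasurable (by fun_prop))
    (by
      filter_upwards [ae_restrict_mem measurableSet_Ioi] with t (ht : 1 < t) z hz
      rw [norm_neg]
      exact norm_cexp_neg_mul_le (by linarith) (half_le_re hz))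
    (exp_neg_integrableOn_Ioi 1 half_re_pos)
    (by
      filter_upwards [ae_restrict_mem measurableSet_Ioi] with t (ht : 1 < t) z _
      exact hasDerivAt_cexp_neg_mul_div (mod_cast (by linarith : t ≠ 0)) z)).2
  rwa [integral_neg, integral_cexp_neg_mul_Ioi_one hζ, ← neg_div] at h

-- The bound does not depend on `x` because `y e^(-y)` is bounded, at `y = t x`.
lemma norm_mul_cexp_neg_mul_div_le {x t : ℝ} (hx : 0 < x) (ht : 0 < t) :
    ‖(x : ℂ) * (Complex.exp (-(t : ℂ) * x) / t)‖ ≤ t ^ (-2 : ℝ) := by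
  have hexp : t * x * Real.exp (-(t * x)) ≤ 1 :=
    (Real.mul_exp_neg_le_exp_neg_one _).trans (Real.exp_le_one_iff.2 (by norm_num))
  have hnorm : ‖(x : ℂ) * (Complex.exp (-(t : ℂ) * x) / t)‖ = x * (Real.exp (-(t * x)) / t) := by
    rw [norm_mul, norm_div, Complex.norm_of_nonneg hx.le, Complex.norm_of_nonneg ht.le,
      Complex.norm_exp]
    simp
  rw [hnorm, Real.rpow_neg ht.le, Real.rpow_two, ← one_div, le_div_iff₀ (by positivity)]
  calc x * (Real.exp (-(t * x)) / t) * t ^ 2 = t * x * Real.exp (-(t * x)) := by field_simp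
    _ ≤ 1 := hexp

lemma tendsto_mul_E1_nhdsGT_zero :
    Tendsto (fun x : ℝ ↦ (x : ℂ) * E1 x) (𝓝[>] 0) (𝓝 0) := by
  have lim : Tendsto (fun x : ℝ ↦ ∫ t in Ioi (1 : ℝ), (x : ℂ) * (Complex.exp (-(t : ℂ) * x) / t))
      (𝓝[>] 0) (𝓝 (∫ _ in Ioi (1 : ℝ), (0 : ℂ))) := by
    refine tendsto_integral_filter_of_dominated_convergence (fun t : ℝ ↦ t ^ (-2 : ℝ))
      (Eventually.of_forall fun x ↦ (aestronglyMeasurable_cexp_neg_mul_div x _).const_mul _) ?_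
      (integrableOn_Ioi_rpow_of_lt (by norm_num) one_pos) (Eventually.of_forall fun t ↦ ?_)
    · filter_upwards [self_mem_nhdsWithin] with x hx
      filter_upwards [ae_restrict_mem measurableSet_Ioi] with t ht
      exact norm_mul_cexp_neg_mul_div_le hx (one_pos.trans ht)
    · have hcont : Continuous fun x : ℝ ↦ (x : ℂ) * (Complex.exp (-(t : ℂ) * x) / t) := by fun_prop
      simpa using (hcont.tendsto 0).mono_left nhdsWithin_le_nhds
  simpa only [E1, integral_const_mul, integral_zero] using lim

lemma hasDerivAt_exp_div_pow (j : ℕ) {z : ℂ} (hz : z ≠ 0) :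
    HasDerivAt (fun w ↦ Complex.exp w / w ^ j)
      (Complex.exp z / z ^ j - j * (Complex.exp z / z ^ (j + 1))) z := by
  refine ((Complex.hasDerivAt_exp z).div (hasDerivAt_pow j z) (pow_ne_zero j hz)).congr_deriv ?_
  cases j with
  | zero => simp
  | succ j =>
    rw [Nat.add_sub_cancel]
    field_simp
    ring

lemma hasDerivAt_E1_neg {z : ℂ} (hz : z.re < 0) :
    HasDerivAt (fun w ↦ E1 (-w)) (-(Complex.exp z / z)) z := by
  have h := (hasDerivAt_E1 (ζ := -z) (by simpa using hz)).comp z (hasDerivAt_neg z)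
  refine h.congr_deriv ?_
  rw [neg_neg, div_neg, neg_div, neg_neg, mul_neg_one]

lemma monomialSecondKind_succ (k : ℕ) (z : ℂ) :
    monomialSecondKind (k + 1) z =
      z * monomialSecondKind k z + (k + 1).factorial * (Complex.exp z / z) := by
  have hsum : ∑ m ∈ Finset.range (k + 1 + 1), ((k + 1 - m).factorial : ℂ) * z ^ m =
      z * (∑ m ∈ Finset.range (k + 1), ((k - m).factorial : ℂ) * z ^ m) + (k + 1).factorial := by
    rw [Finset.sum_range_succ', Finset.mul_sum]
    simp [pow_succ', mul_left_comm]
  rw [monomialSecondKind, monomialSecondKind, hsum]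
  ring

lemma mul_monomialSecondKind_pred (k : ℕ) (z : ℂ) :
    (k : ℂ) * (z * monomialSecondKind (k - 1) z) =
      k * (monomialSecondKind k z - k.factorial * (Complex.exp z / z)) := by
  cases k with
  | zero => simp
  | succ k => rw [monomialSecondKind_succ, Nat.add_sub_cancel, add_sub_cancel_right]

lemma hasDerivAt_monomialSecondKind (k : ℕ) {z : ℂ} (hz : z.re < 0) :
    HasDerivAt (monomialSecondKind k)
      (k * monomialSecondKind (k - 1) z - k.factorial * (Complex.exp z / z ^ 2)) z := by
  have hz₀ := ne_zero_of_re_neg hz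
  have hexp := hasDerivAt_exp_div_pow 1 hz₀
  simp only [pow_one, Nat.cast_one, one_mul, one_add_one_eq_two] at hexp
  induction k with
  | zero =>
    have hzero : monomialSecondKind 0 = fun w ↦ Complex.exp w / w + E1 (-w) := by
      ext w
      simp [monomialSecondKind]
    rw [hzero]
    refine (hexp.add (hasDerivAt_E1_neg hz)).congr_deriv ?_
    simp only [Nat.cast_zero, Nat.factorial_zero, Nat.cast_one]
    ring
  | succ k ih =>
    rw [funext (monomialSecondKind_succ k)]
    refine (((hasDerivAt_id z).mul ih).add
      (hexp.const_mul ((k + 1).factorial : ℂ))).congr_deriv ?_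
    have hw : z * (Complex.exp z / z ^ 2) = Complex.exp z / z := by field_simp
    rw [Nat.add_sub_cancel, Nat.factorial_succ]
    push_cast
    simp only [id]
    linear_combination mul_monomialSecondKind_pred k z - (k.factorial : ℂ) * hw

lemma analyticAt_monomialSecondKind (k : ℕ) {z : ℂ} (hz : z.re < 0) :
    AnalyticAt ℂ (monomialSecondKind k) z :=
  DifferentiableOn.analyticAt
    (fun _ hw ↦ (hasDerivAt_monomialSecondKind k hw).differentiableAt.differentiableWithinAt)
    ((Complex.isOpen_re_lt 0).mem_nhds hz)

lemma laguerreOp_monomialSecondKind (k : ℕ) {z : ℂ} (hz : z.re < 0) :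
    laguerreOp 1 k (monomialSecondKind k) z = k * (k + 1) * monomialSecondKind (k - 1) z := by
  have hz₀ := ne_zero_of_re_neg hz
  have deriv_near : deriv (monomialSecondKind k) =ᶠ[𝓝 z] fun w ↦
      k * monomialSecondKind (k - 1) w - k.factorial * (Complex.exp w / w ^ 2) :=
    ((Complex.isOpen_re_lt 0).eventually_mem hz).mono fun _ hw ↦
      (hasDerivAt_monomialSecondKind k hw).deriv
  have deriv_deriv := (((hasDerivAt_monomialSecondKind (k - 1) hz).const_mul (k : ℂ)).fun_sub
    ((hasDerivAt_exp_div_pow 2 hz₀).const_mul (k.factorial : ℂ))).deriv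
  have hw₂ : z * (Complex.exp z / z ^ 2) = Complex.exp z / z := by field_simp
  have hw₃ : z * (Complex.exp z / z ^ 3) = Complex.exp z / z ^ 2 := by field_simp
  rw [laguerreOp, deriv_near.deriv_eq, deriv_near.eq_of_nhds, deriv_deriv]
  cases k with
  | zero =>
    simp only [Nat.cast_zero, Nat.factorial_zero, Nat.cast_one, Nat.cast_ofNat]
    linear_combination 2 * hw₃
  | succ k =>
    have hsucc := monomialSecondKind_succ k z
    rw [Nat.factorial_succ] at hsucc ⊢
    rw [Nat.add_sub_cancel]
    push_cast at hsucc ⊢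
    linear_combination ((k : ℂ) + 1) * mul_monomialSecondKind_pred k z + ((k : ℂ) + 1) * hsucc +
      ((k : ℂ) + 1) * k.factorial * (2 * hw₃ - hw₂)

lemma vsol_eq_sum_monomialSecondKind (n : ℕ) :
    vsol n = fun z ↦
      ∑ k ∈ Finset.range (n + 1), laguerreCoeff 1 n k * monomialSecondKind k z := by
  ext z
  rw [vsol, laguerre_eq_sum_laguerreCoeff, Pn, mul_div_assoc, Finset.sum_mul, Finset.sum_mul,
    ← Finset.sum_add_distrib]
  refine Finset.sum_congr rfl fun k _ ↦ ?_
  have hsum : ∑ m ∈ Finset.range (k + 1), ((k - m).factorial / k.factorial : ℂ) * z ^ m =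
      (∑ m ∈ Finset.range (k + 1), ((k - m).factorial : ℂ) * z ^ m) / k.factorial := by
    rw [Finset.sum_div]
    exact Finset.sum_congr rfl fun m _ ↦ div_mul_eq_mul_div _ _ _
  rw [hsum, laguerreCoeff, monomialSecondKind]
  ring

lemma laguerreOp_vsol (n : ℕ) {ξ : ℂ} (hξ : ξ.re < 0) : laguerreOp 1 n (vsol n) ξ = 0 := by
  rw [vsol_eq_sum_monomialSecondKind]
  exact_mod_cast laguerreOp_sum_laguerreCoeff_eq_zero 1 n
    (fun k ↦ analyticAt_monomialSecondKind k hξ)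
    fun k ↦ by simpa using laguerreOp_monomialSecondKind k hξ

lemma Pn_zero_right (n : ℕ) : Pn n 0 = 1 := by
  have alternating : ∑ k ∈ Finset.range (n + 2), (-1 : ℂ) ^ k * (n + 1).choose k = 0 := by
    exact_mod_cast Int.alternating_sum_range_choose_of_ne n.succ_ne_zero
  have term (k : ℕ) : (-1 : ℂ) ^ k * (n + 1).choose (k + 1) *
      ∑ m ∈ Finset.range (k + 1), ((k - m).factorial / k.factorial : ℂ) * 0 ^ m =
        -((-1) ^ (k + 1) * (n + 1).choose (k + 1)) := by
    have hfact : (k.factorial : ℂ) ≠ 0 := mod_cast k.factorial_ne_zero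
    simp [Finset.sum_range_succ', hfact, pow_succ]
  rw [Finset.sum_range_succ', pow_zero, Nat.choose_zero_right] at alternating
  simp only [Pn, term, Finset.sum_neg_distrib]
  push_cast at alternating
  linear_combination -alternating

lemma continuous_Pn (n : ℕ) : Continuous (Pn n) := by
  unfold Pn
  fun_prop

lemma tendsto_laguerre_nhdsLT_zero (β n : ℕ) :
    Tendsto (fun x : ℝ ↦ laguerre β n x) (𝓝[<] 0) (𝓝 ((n + β).choose n)) := by
  have h := (continuous_laguerre β n).comp Complex.continuous_ofReal |>.tendsto 0
  simpa [laguerre_zero_right, Function.comp_def] using h.mono_left nhdsWithin_le_nhds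

lemma tendsto_mul_vsol_nhdsLT_zero (n : ℕ) :
    Tendsto (fun x : ℝ ↦ (x : ℂ) * vsol n x) (𝓝[<] 0) (𝓝 1) := by
  have regular : Tendsto (fun x : ℝ ↦ Pn n x * Complex.exp x) (𝓝[<] 0) (𝓝 1) := by
    have h := ((continuous_Pn n).mul Complex.continuous_exp).comp Complex.continuous_ofReal
      |>.tendsto 0
    simpa [Pn_zero_right, Function.comp_def] using h.mono_left nhdsWithin_le_nhds
  have logarithmic : Tendsto (fun x : ℝ ↦ (x : ℂ) * E1 (-x)) (𝓝[<] 0) (𝓝 0) := by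
    have hneg : Tendsto (fun x : ℝ ↦ -x) (𝓝[<] 0) (𝓝[>] 0) := by
      simpa using tendsto_neg_nhdsLT (a := (0 : ℝ))
    simpa using (tendsto_mul_E1_nhdsGT_zero.comp hneg).neg
  have h := regular.add ((tendsto_laguerre_nhdsLT_zero 1 n).mul logarithmic)
  rw [mul_zero, add_zero] at h
  refine h.congr' ?_
  filter_upwards [self_mem_nhdsWithin] with x hx
  have hx₀ : (x : ℂ) ≠ 0 := mod_cast hx.ne
  rw [vsol]
  field_simp

lemma eq_zero_of_vsol_add_laguerre_eq_zero (n : ℕ) {c₁ c₂ : ℂ}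
    (h : ∀ᶠ x : ℝ in 𝓝[<] 0, c₁ * vsol n x + c₂ * laguerre 1 n x = 0) : c₁ = 0 ∧ c₂ = 0 := by
  have hc₁ : c₁ = 0 := by
    have hx : Tendsto (fun x : ℝ ↦ (x : ℂ)) (𝓝[<] 0) (𝓝 0) :=
      (Complex.continuous_ofReal.tendsto 0).mono_left nhdsWithin_le_nhds
    have lim := ((tendsto_mul_vsol_nhdsLT_zero n).const_mul c₁).add
      ((hx.mul (tendsto_laguerre_nhdsLT_zero 1 n)).const_mul c₂)
    simp only [mul_one, zero_mul, mul_zero, add_zero] at lim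
    refine tendsto_nhds_unique_of_eventuallyEq lim tendsto_const_nhds ?_
    filter_upwards [h] with x hx
    linear_combination (x : ℂ) * hx
  have hc₂ : c₂ * (n + 1).choose n = 0 := by
    refine tendsto_nhds_unique_of_eventuallyEq
      ((tendsto_laguerre_nhdsLT_zero 1 n).const_mul c₂) tendsto_const_nhds ?_
    filter_upwards [h] with x hx
    simpa [hc₁] using hx
  exact ⟨hc₁, (mul_eq_zero.1 hc₂).resolve_right
    (mod_cast Nat.choose_ne_zero n.le_succ)⟩

/-- The function v satisfies the Laguerre equation ξv'' + (2-ξ)v' + nv = 0 on Re ξ < 0,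
and is linearly independent of L_n^{(1)}. -/
theorem vsol_solves_laguerre (n : ℕ) :
    (∀ ξ : ℂ, ξ.re < 0 →
        ξ * deriv (deriv (vsol n)) ξ + (2 - ξ) * deriv (vsol n) ξ + (n : ℂ) * vsol n ξ = 0) ∧
    (∀ c₁ c₂ : ℂ,
        (∀ ξ : ℂ, ξ.re < 0 → c₁ * vsol n ξ + c₂ * laguerre 1 n ξ = 0) → c₁ = 0 ∧ c₂ = 0) := by
  refine ⟨fun ξ hξ ↦ ?_, fun c₁ c₂ h ↦ eq_zero_of_vsol_add_laguerre_eq_zero n ?_⟩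
  · simpa only [laguerreOp, one_add_one_eq_two] using laguerreOp_vsol n hξ
  · filter_upwards [self_mem_nhdsWithin] with x hx
    exact h x (by simpa using hx)
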